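/- Let E be a finite-dimensional complex vector space, f₁,...,f_r ∈ E* linearly independent, and σ₁,...,σ_r ∈ E dual vectors with f_j(σ_k) = δ_{jk}. If ξ ∈ Λ^{r+1}E satisfies δ_{f_r} ⋯ δ_{f_1} ξ = 0, then ξ can be written as ξ = Σ_{j=1}^r δ_{f_j}(σ_j ∧ ξ_j) for some ξ_j ∈ Λ^{r+2}E. (Exactness of the generalized Koszul complex at degree E₂ in the pointwise surjective case.) -/

import Mathlib

/-- Interior multiplication (contraction) by a functional `η ∈ E*` on the exterior
algebra `ΛE`. -/
noncomputable def interiorMul {E : Type*} [AddCommGroup E] [Module ℂ E]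
    (η : Module.Dual ℂ E) : ExteriorAlgebra ℂ E →ₗ[ℂ] ExteriorAlgebra ℂ E :=
  CliffordAlgebra.contractLeft η

theorem interiorMul_ι_mul {E : Type*} [AddCommGroup E] [Module ℂ E]
    (η : Module.Dual ℂ E) (a : E) (x : ExteriorAlgebra ℂ E) :
    interiorMul η (ExteriorAlgebra.ι ℂ a * x) =
      η a • x - ExteriorAlgebra.ι ℂ a * interiorMul η x :=
  CliffordAlgebra.contractLeft_ι_mul η a x

theorem foldl_interiorMul_mul {E : Type*} [AddCommGroup E] [Module ℂ E] (s : E)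
    (l : List (Module.Dual ℂ E)) : (∀ η ∈ l, η s = 0) → ∀ (c : ℂ) (y : ExteriorAlgebra ℂ E),
      l.foldl (fun x η => interiorMul η x) y = 0 →
      l.foldl (fun x η => interiorMul η x) (c • (ExteriorAlgebra.ι ℂ s * y)) = 0 := by
  induction l with
  | nil =>
    intro _ c y h
    simp only [List.foldl_nil] at h ⊢
    simp [h]
  | cons η l ih =>
    intro hl c y h
    simp only [List.foldl_cons] at h ⊢
    have h1 : η s = 0 := hl η (by simp)
    have := ih (fun θ hθ => hl θ (by simp [hθ])) (-c) (interiorMul η y) h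
    rw [map_smul, interiorMul_ι_mul, h1]
    simpa using this

theorem number_mem {E : Type*} [AddCommGroup E] [Module ℂ E]
    (η : Module.Dual ℂ E) (s : E) (n : ℕ) : ∀ x ∈ ⋀[ℂ]^n E,
      ExteriorAlgebra.ι ℂ s * interiorMul η x ∈ ⋀[ℂ]^n E := by
  induction n with
  | zero =>
    intro x hx
    rw [ExteriorAlgebra.exteriorPower, pow_zero, Submodule.mem_one] at hx
    obtain ⟨c, rfl⟩ := hx
    have : interiorMul η (algebraMap ℂ (ExteriorAlgebra ℂ E) c) = 0 :=
      CliffordAlgebra.contractLeft_algebraMap (d := η) _ c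
    rw [this, mul_zero]
    exact Submodule.zero_mem _
  | succ n ih =>
    intro x hx
    have hx' := hx
    rw [ExteriorAlgebra.exteriorPower, pow_succ'] at hx'
    induction hx' using Submodule.mul_induction_on' with
    | mem_mul_mem m hm y hy =>
      obtain ⟨a, rfl⟩ := hm
      have hsa : ExteriorAlgebra.ι ℂ s * ExteriorAlgebra.ι ℂ a =
          - (ExteriorAlgebra.ι ℂ a * ExteriorAlgebra.ι ℂ s) :=
        eq_neg_of_add_eq_zero_left (ExteriorAlgebra.ι_add_mul_swap s a)
      rw [interiorMul_ι_mul, mul_sub, ← mul_assoc, hsa, neg_mul, sub_neg_eq_add, mul_smul_comm,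
        mul_assoc]
      refine Submodule.add_mem _ (Submodule.smul_mem _ _ ?_) ?_
      · rw [ExteriorAlgebra.exteriorPower, pow_succ']
        exact Submodule.mul_mem_mul ⟨s, rfl⟩ hy
      · rw [ExteriorAlgebra.exteriorPower, pow_succ']
        exact Submodule.mul_mem_mul ⟨a, rfl⟩ (ih y hy)
    | add y hy z hz h1 h2 =>
      rw [map_add, mul_add]
      rw [← pow_succ', ← ExteriorAlgebra.exteriorPower] at hy hz
      exact Submodule.add_mem _ (h1 hy) (h2 hz)

theorem koszul_aux {E : Type*} [AddCommGroup E] [Module ℂ E] (n : ℕ) {r : ℕ} :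
    ∀ (fj : Fin r → Module.Dual ℂ E) (σ : Fin r → E)
    (_ : ∀ j k, fj j (σ k) = if j = k then 1 else 0)
    (ξ : ExteriorAlgebra ℂ E) (_ : ξ ∈ ⋀[ℂ]^n E)
    (_ : (List.ofFn fj).foldl (fun x η => interiorMul η x) ξ = 0),
    ∃ ξj : Fin r → ExteriorAlgebra ℂ E,
      (∀ j, ExteriorAlgebra.ι ℂ (σ j) * ξj j ∈ ⋀[ℂ]^(n+1) E) ∧
      ξ = ∑ j, interiorMul (fj j) (ExteriorAlgebra.ι ℂ (σ j) * ξj j) := by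
  induction r with
  | zero =>
    intro fj σ _ ξ _ h0
    refine ⟨fun _ => 0, fun j => j.elim0, ?_⟩
    simpa using h0
  | succ r ih =>
    intro fj σ hd ξ hξ h0
    rw [List.ofFn_succ, List.foldl_cons] at h0
    have hz := foldl_interiorMul_mul (σ 0) (List.ofFn fun i : Fin r => fj i.succ) (by
      intro η hη
      rw [List.mem_ofFn] at hη
      obtain ⟨i, rfl⟩ := hη
      simp [hd]) 1 _ h0
    rw [one_smul] at hz
    obtain ⟨ζ, h1, h2⟩ := ih (fun i => fj i.succ) (fun i => σ i.succ)
      (fun j k => by simp [hd]) _ (number_mem (fj 0) (σ 0) n ξ hξ) hz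
    refine ⟨Fin.cons ξ ζ, ?_, ?_⟩
    · intro j
      refine Fin.cases ?_ (fun i => ?_) j
      · rw [Fin.cons_zero, ExteriorAlgebra.exteriorPower, pow_succ']
        exact Submodule.mul_mem_mul ⟨σ 0, rfl⟩ hξ
      · rw [Fin.cons_succ]
        exact h1 i
    · rw [Fin.sum_univ_succ]
      simp only [Fin.cons_zero, Fin.cons_succ]
      rw [← h2, interiorMul_ι_mul, hd]
      simp

/-- Exactness of the generalized Koszul complex at `E₂` in the pointwise surjective
case: if `f₁,…,f_r ∈ E*` have dual vectors `σ₁,…,σ_r` (`fⱼ(σₖ) = δⱼₖ`) and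
`ξ ∈ Λ^{r+1}E` satisfies `δ_{f_r}⋯δ_{f_1} ξ = 0`, then `ξ = Σⱼ δ_{fⱼ}(σⱼ ∧ ξⱼ)` with
each `σⱼ ∧ ξⱼ ∈ Λ^{r+2}E`. -/
theorem stmt6 {E : Type*} [AddCommGroup E] [Module ℂ E] {r : ℕ}
    (fj : Fin r → Module.Dual ℂ E) (σ : Fin r → E)
    (hdual : ∀ j k, fj j (σ k) = if j = k then 1 else 0)
    (ξ : ExteriorAlgebra ℂ E) (hξ : ξ ∈ ⋀[ℂ]^(r+1) E)
    (h0 : (List.ofFn fj).foldl (fun x η => interiorMul η x) ξ = 0) :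
    ∃ ξj : Fin r → ExteriorAlgebra ℂ E,
      (∀ j, ExteriorAlgebra.ι ℂ (σ j) * ξj j ∈ ⋀[ℂ]^(r+2) E) ∧
      ξ = ∑ j, interiorMul (fj j) (ExteriorAlgebra.ι ℂ (σ j) * ξj j) := by
  exact koszul_aux (r+1) fj σ hdual ξ hξ h0
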